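/- For every b ∈ (0,1) there exists a constant λ_b > 0 such that for every measurable subset A ⊆ S^1, ∬_{A×A} |x − y|^{−b} dσ(x) dσ(y) ≥ λ_b·(∬_{A×S^1} |x − y|^{−b} dσ(x) dσ(y))^2. One may take λ_b = 1/(2^b·η(b)^2), where η(b) := ∫_{S^1} |x − y|^{−b} dσ(y) (which is independent of x ∈ S^1). -/

import Mathlib

open MeasureTheory
open scoped ENNReal

noncomputable section

/-- Arc-length measure on the unit circle, realized as a measure on ℂ:
the pushforward of Lebesgue measure on `[0, 2π)` under `θ ↦ exp (θ i)`. -/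
def circleMeasure : Measure ℂ :=
  Measure.map (fun θ : ℝ => Complex.exp (θ * Complex.I))
    (volume.restrict (Set.Ico 0 (2 * Real.pi)))

/-- The unit circle `S¹ ⊆ ℂ`. -/
def unitCircle : Set ℂ := Metric.sphere (0 : ℂ) 1

end


/-- The kernel as a function of the angle difference. -/
noncomputable def angKer (b t : ℝ) : ℝ≥0∞ :=
  ENNReal.ofReal (‖Complex.exp (Complex.I * t) - 1‖ ^ (-b))

lemma measurable_angKer (b : ℝ) : Measurable (angKer b) := by
  unfold angKer; fun_prop

lemma angKer_periodic (b : ℝ) : Function.Periodic (angKer b) (2 * Real.pi) := by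
  intro t
  unfold angKer
  have : Complex.exp (Complex.I * ((t + 2 * Real.pi : ℝ) : ℂ)) = Complex.exp (Complex.I * t) := by
    push_cast
    rw [mul_add, mul_comm Complex.I (2 * (Real.pi : ℂ))]
    exact Complex.exp_periodic _
  rw [this]

lemma angKer_bound {b : ℝ} (hb : 0 < b) {t : ℝ} (h0 : 0 < t) (h1 : t ≤ Real.pi) :
    angKer b t ≤ ENNReal.ofReal ((2 / Real.pi) ^ (-b) * t ^ (-b)) := by
  unfold angKer
  apply ENNReal.ofReal_le_ofReal
  have hpi := Real.pi_pos
  rw [Complex.norm_exp_I_mul_ofReal_sub_one, ← Real.mul_rpow (by positivity) h0.le]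
  apply Real.rpow_le_rpow_of_nonpos (by positivity) _ (by linarith)
  have := Real.mul_le_sin (x := t / 2) (by linarith) (by linarith)
  have h2 : 2 / Real.pi * t = 2 * (2 / Real.pi * (t / 2)) := by ring
  rw [h2, Real.norm_eq_abs]
  exact le_trans (by linarith) (le_abs_self _)

lemma angKer_neg (b t : ℝ) : angKer b (-t) = angKer b t := by
  unfold angKer
  rw [Complex.norm_exp_I_mul_ofReal_sub_one, Complex.norm_exp_I_mul_ofReal_sub_one]
  have : -t / 2 = -(t / 2) := by ring
  rw [this, Real.sin_neg, mul_neg, norm_neg]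

lemma angKer_shift (b a c : ℝ) :
    ∫⁻ t in Set.Ioc a (a + 2 * Real.pi), angKer b t =
      ∫⁻ t in Set.Ioc c (c + 2 * Real.pi), angKer b t := by
  refine (isAddFundamentalDomain_Ioc Real.two_pi_pos a).setLIntegral_eq
    (isAddFundamentalDomain_Ioc Real.two_pi_pos c) _ ?_
  rintro ⟨g, hg⟩ x
  obtain ⟨n, rfl⟩ := AddSubgroup.mem_zmultiples_iff.1 hg
  change angKer b (n • (2 * Real.pi) + x) = angKer b x
  rw [add_comm]
  exact (angKer_periodic b).zsmul n x

lemma angKer_half {b : ℝ} (hb : 0 < b) (hb1 : b < 1) :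
    ∫⁻ t in Set.Ioc 0 Real.pi, angKer b t < ∞ := by
  have hi : IntegrableOn (fun t : ℝ => (2 / Real.pi) ^ (-b) * t ^ (-b)) (Set.Ioc 0 Real.pi) := by
    apply Integrable.const_mul
    have := intervalIntegral.intervalIntegrable_rpow' (a := 0) (b := Real.pi) (r := -b)
      (by linarith)
    exact (intervalIntegrable_iff_integrableOn_Ioc_of_le Real.pi_pos.le).1 this
  refine lt_of_le_of_lt ?_ hi.lintegral_lt_top
  exact setLIntegral_mono' measurableSet_Ioc fun t ht => angKer_bound hb ht.1 ht.2

lemma angKer_lt_top {b : ℝ} (hb : 0 < b) (hb1 : b < 1) :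
    ∫⁻ t in Set.Ioc 0 (2 * Real.pi), angKer b t < ∞ := by
  have h := angKer_shift b 0 (-Real.pi)
  rw [zero_add] at h
  rw [h, show -Real.pi + 2 * Real.pi = Real.pi by ring,
    ← Set.Ioc_union_Ioc_eq_Ioc (b := 0) (by linarith [Real.pi_pos]) Real.pi_pos.le]
  refine lt_of_le_of_lt (lintegral_union_le _ _ _) (ENNReal.add_lt_top.2 ⟨?_, angKer_half hb hb1⟩)
  have hm : MeasurePreserving (fun t : ℝ => -t) volume volume := Measure.measurePreserving_neg _
  have := hm.setLIntegral_comp_preimage (s := Set.Ico 0 Real.pi) measurableSet_Ico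
    (measurable_angKer b)
  simp only [angKer_neg] at this
  have hs : (fun t : ℝ => -t) ⁻¹' Set.Ico 0 Real.pi = Set.Ioc (-Real.pi) 0 := by
    ext t; simp only [Set.mem_preimage, Set.mem_Ico, Set.mem_Ioc]
    constructor <;> rintro ⟨h1, h2⟩ <;> constructor <;> linarith
  rw [hs] at this
  rw [this, setLIntegral_congr Ico_ae_eq_Ioc]
  exact angKer_half hb hb1

lemma measurable_expI : Measurable (fun θ : ℝ => Complex.exp (θ * Complex.I)) := by fun_prop

instance : IsFiniteMeasure circleMeasure := by
  unfold circleMeasure; infer_instance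

lemma circle_inner (b : ℝ) (x : ℂ) (hx : x ∈ unitCircle) :
    ∫⁻ y, ENNReal.ofReal (‖x - y‖ ^ (-b)) ∂circleMeasure =
      ∫⁻ t in Set.Ioc 0 (2 * Real.pi), angKer b t := by
  have hx1 : ‖x‖ = 1 := by simpa [unitCircle] using hx
  have hxa : x = Complex.exp (x.arg * Complex.I) := by
    have := Complex.norm_mul_exp_arg_mul_I x
    rw [hx1] at this; simpa using this.symm
  set α := x.arg
  unfold circleMeasure
  rw [lintegral_map (by fun_prop) measurable_expI, setLIntegral_congr Ico_ae_eq_Ioc]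
  have hk : ∀ θ : ℝ, ENNReal.ofReal (‖x - Complex.exp (θ * Complex.I)‖ ^ (-b)) =
      angKer b (θ + -α) := by
    intro θ
    unfold angKer
    have : Complex.exp (θ * Complex.I) - x = x * (Complex.exp (Complex.I * ((θ + -α : ℝ) : ℂ)) - 1) := by
      rw [mul_sub, mul_one]
      conv_rhs => rw [hxa]
      rw [← Complex.exp_add, ← hxa]
      congr 2
      push_cast; ring
    rw [norm_sub_rev, this, norm_mul, hx1, one_mul]
  simp_rw [hk]
  have hm : MeasurePreserving (fun t : ℝ => t + -α) volume volume :=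
    measurePreserving_add_right _ _
  have := hm.setLIntegral_comp_preimage (s := Set.Ioc (-α) (-α + 2 * Real.pi)) measurableSet_Ioc
    (measurable_angKer b)
  have hs : (fun t : ℝ => t + -α) ⁻¹' Set.Ioc (-α) (-α + 2 * Real.pi) =
      Set.Ioc 0 (2 * Real.pi) := by
    ext t; simp only [Set.mem_preimage, Set.mem_Ioc]
    constructor <;> rintro ⟨h1, h2⟩ <;> constructor <;> linarith
  rw [hs] at this
  rw [this, angKer_shift b (-α) 0, zero_add]

lemma circle_ae : ∀ᵐ y ∂circleMeasure, y ∈ unitCircle := by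
  unfold circleMeasure
  rw [ae_map_iff measurable_expI.aemeasurable
    (by unfold unitCircle; exact Metric.isClosed_sphere.measurableSet)]
  refine Filter.Eventually.of_forall fun θ => ?_
  simp [unitCircle, Complex.norm_exp_ofReal_mul_I]

lemma circle_noAtoms (x : ℂ) : circleMeasure {x} = 0 := by
  unfold circleMeasure
  rw [Measure.map_apply measurable_expI (measurableSet_singleton x),
    Measure.restrict_apply (measurable_expI (measurableSet_singleton x))]
  apply Set.Subsingleton.measure_zero
  rintro s ⟨hs, hs0, hs1⟩ t ⟨ht, ht0, ht1⟩
  have he : Complex.exp (s * Complex.I) = Complex.exp (t * Complex.I) := by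
    rw [Set.mem_preimage, Set.mem_singleton_iff] at hs ht
    exact hs.trans ht.symm
  obtain ⟨n, hn⟩ := Complex.exp_eq_exp_iff_exists_int.1 he
  have hn' : s = t + n * (2 * Real.pi) := by
    have := congrArg Complex.im hn
    simpa using this
  have hpi := Real.pi_pos
  have h1 : n < 1 := by
    by_contra h
    have : (1 : ℝ) ≤ n := by exact_mod_cast not_lt.1 h
    nlinarith
  have h2 : -1 < n := by
    by_contra h
    have : (n : ℝ) ≤ -1 := by exact_mod_cast not_lt.1 h
    nlinarith
  have : n = 0 := by omega
  simpa [this] using hn'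

lemma ker_lower {b : ℝ} (hb : 0 < b) {x y : ℂ} (hx : x ∈ unitCircle) (hy : y ∈ unitCircle)
    (hxy : x ≠ y) : ENNReal.ofReal (2 ^ (-b)) ≤ ENNReal.ofReal (‖x - y‖ ^ (-b)) := by
  apply ENNReal.ofReal_le_ofReal
  apply Real.rpow_le_rpow_of_nonpos (norm_pos_iff.2 (sub_ne_zero.2 hxy)) _ (by linarith)
  have hx1 : ‖x‖ = 1 := by simpa [unitCircle] using hx
  have hy1 : ‖y‖ = 1 := by simpa [unitCircle] using hy
  linarith [norm_sub_le x y]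

lemma inner_lower {b : ℝ} (hb : 0 < b) {x : ℂ} (hx : x ∈ unitCircle) (A : Set ℂ) :
    ENNReal.ofReal (2 ^ (-b)) * circleMeasure A ≤
      ∫⁻ y in A, ENNReal.ofReal (‖x - y‖ ^ (-b)) ∂circleMeasure := by
  rw [← setLIntegral_const]
  apply lintegral_mono_ae
  apply ae_restrict_of_ae
  have h : ∀ᵐ y ∂circleMeasure, y ≠ x := by
    rw [ae_iff]; simpa using circle_noAtoms x
  filter_upwards [circle_ae, h] with y hy hyx
  exact ker_lower hb hx hy hyx.symm

lemma circle_total : circleMeasure Set.univ = ENNReal.ofReal (2 * Real.pi) := by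
  unfold circleMeasure
  rw [Measure.map_apply measurable_expI MeasurableSet.univ]
  simp

/-- For every `b ∈ (0,1)` there is `λ_b > 0`, namely `λ_b = 1/(2^b η(b)²)` where
`η(b) = ∫_{S¹} |x - y|^{-b} dσ(y)` (independent of `x ∈ S¹`), such that
`∬_{A×A} |x-y|^{-b} ≥ λ_b (∬_{A×S¹} |x-y|^{-b})²` for every measurable `A ⊆ S¹`. -/
theorem double_integral_negative_power_bound (b : ℝ) (hb : b ∈ Set.Ioo (0 : ℝ) 1) :
    ∃ ηb : ℝ, 0 < ηb ∧
      (∀ x ∈ unitCircle,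
        (∫⁻ y, ENNReal.ofReal (‖x - y‖ ^ (-b)) ∂circleMeasure) = ENNReal.ofReal ηb) ∧
      0 < 1 / (2 ^ b * ηb ^ 2) ∧
      ∀ A : Set ℂ, A ⊆ unitCircle → MeasurableSet A →
        ENNReal.ofReal (1 / (2 ^ b * ηb ^ 2)) *
            (∫⁻ q in A ×ˢ unitCircle, ENNReal.ofReal (‖q.1 - q.2‖ ^ (-b))
              ∂(circleMeasure.prod circleMeasure)) ^ 2 ≤
          ∫⁻ q in A ×ˢ A, ENNReal.ofReal (‖q.1 - q.2‖ ^ (-b))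
            ∂(circleMeasure.prod circleMeasure) := by
  obtain ⟨hb0, hb1⟩ := hb
  set E : ℝ≥0∞ := ∫⁻ t in Set.Ioc 0 (2 * Real.pi), angKer b t with hE
  have hEtop : E ≠ ∞ := (angKer_lt_top hb0 hb1).ne
  have hone : (1 : ℂ) ∈ unitCircle := by simp [unitCircle]
  have hEpos : 0 < E := by
    have := inner_lower hb0 hone Set.univ
    rw [Measure.restrict_univ, circle_inner b 1 hone, circle_total] at this
    refine lt_of_lt_of_le ?_ this
    apply ENNReal.mul_pos
    · rw [ne_eq, ENNReal.ofReal_eq_zero, not_le]; positivity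
    · rw [ne_eq, ENNReal.ofReal_eq_zero, not_le]; exact Real.two_pi_pos
  have hη : 0 < E.toReal := ENNReal.toReal_pos hEpos.ne' hEtop
  refine ⟨E.toReal, hη, ?_, by positivity, ?_⟩
  · intro x hx
    rw [ENNReal.ofReal_toReal hEtop, circle_inner b x hx]
  intro A hA hAm
  have hmeas : Measurable (fun q : ℂ × ℂ => ENNReal.ofReal (‖q.1 - q.2‖ ^ (-b))) := by fun_prop
  rw [← Measure.prod_restrict, ← Measure.prod_restrict, lintegral_prod _ hmeas.aemeasurable,
    lintegral_prod _ hmeas.aemeasurable, Measure.restrict_eq_self_of_ae_mem circle_ae]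
  have h1 : ∫⁻ x in A, ∫⁻ y, ENNReal.ofReal (‖x - y‖ ^ (-b)) ∂circleMeasure ∂circleMeasure =
      E * circleMeasure A := by
    rw [← setLIntegral_const]
    exact setLIntegral_congr_fun hAm fun x hx => circle_inner b x (hA hx)
  have h2 : ENNReal.ofReal (2 ^ (-b)) * circleMeasure A * circleMeasure A ≤
      ∫⁻ x in A, ∫⁻ y in A, ENNReal.ofReal (‖x - y‖ ^ (-b)) ∂circleMeasure ∂circleMeasure := by
    rw [← setLIntegral_const]
    exact setLIntegral_mono' hAm fun x hx => inner_lower hb0 (hA hx) A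
  rw [h1]
  refine le_trans (le_of_eq ?_) h2
  have h3 : ENNReal.ofReal (1 / (2 ^ b * E.toReal ^ 2)) * E ^ 2 = ENNReal.ofReal (2 ^ (-b)) := by
    conv_lhs => rw [← ENNReal.ofReal_toReal hEtop]
    rw [← ENNReal.ofReal_pow hη.le, ← ENNReal.ofReal_mul (by positivity),
      ENNReal.toReal_ofReal hη.le, Real.rpow_neg (by norm_num)]
    congr 1
    field_simp
  rw [mul_pow, ← mul_assoc, h3, sq, mul_assoc]
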